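/- arXiv:2405.16882 — 2 statements merged into one kernel-verified Lean document; each statement's English description precedes it below -/
import Mathlib

section
/- Let I_1,…,I_t ⊂ S = K[x_1,…,x_n] be nonzero proper monomial ideals with pairwise disjoint supports and equal initial degrees α(I_1) = α(I_2) = ⋯ = α(I_t) = a. Suppose that for each j = 1,…,t there exists k_j such that v(I_j^k) = a·k − 1 for all k ≥ k_j. Then there exists k_0 such that for all k ≥ k_0, v((I_1 + ⋯ + I_t)^k) = a·k + ((t−1)·a − t). -/
open MvPolynomial

noncomputable section

/-- The set of associated primes `Ass(L)` of the quotient by an ideal `L`. -/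
def assOf {A : Type} [CommRing A] (L : Ideal A) : Set (Ideal A) :=
  associatedPrimes A (A ⧸ L)

/-- `𝔄` is the stable value `Ass^∞(L)` of `Ass(L^k)` for all large `k`. -/
def IsStableAssValue {A : Type} [CommRing A] (L : Ideal A) (𝔄 : Set (Ideal A)) : Prop :=
  ∃ N : ℕ, ∀ k : ℕ, N ≤ k → assOf (L ^ k) = 𝔄

/-- `Ass^*(L) = ⋃_{k ≥ 1} Ass(L^k)`. -/
def assStar {A : Type} [CommRing A] (L : Ideal A) : Set (Ideal A) :=
  {p | ∃ k : ℕ, 1 ≤ k ∧ p ∈ assOf (L ^ k)}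

/-- The local v-number `v_p(L)`: the least degree of a homogeneous `f` with `(L : f) = p`. -/
def vnum {σ K : Type} [Field K] (L p : Ideal (MvPolynomial σ K)) : ℕ :=
  sInf {d : ℕ | ∃ f : MvPolynomial σ K, f.IsHomogeneous d ∧ L.colon (Ideal.span {f}) = p}

/-- The v-number `v(L) = min_{p ∈ Ass(L)} v_p(L)`. -/
def vnumber {σ K : Type} [Field K] (L : Ideal (MvPolynomial σ K)) : ℕ :=
  sInf {d : ℕ | ∃ p ∈ assOf L, ∃ f : MvPolynomial σ K,
    f.IsHomogeneous d ∧ L.colon (Ideal.span {f}) = p}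

/-- The initial degree `α(L)`: the least `d` such that `L` contains a nonzero
homogeneous element of degree `d`. -/
def alphaDeg {σ K : Type} [Field K] (L : Ideal (MvPolynomial σ K)) : ℕ :=
  sInf {d : ℕ | ∃ f ∈ L, f ≠ 0 ∧ MvPolynomial.IsHomogeneous f d}

/-- A graded (homogeneous) ideal: one containing all homogeneous components
of each of its elements. -/
def IsGradedIdeal {σ K : Type} [Field K] (I : Ideal (MvPolynomial σ K)) : Prop :=
  ∀ f ∈ I, ∀ d : ℕ, homogeneousComponent d f ∈ I

/-- A monomial ideal: an ideal generated by monomials. -/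
def IsMonomialIdeal {σ K : Type} [Field K] (I : Ideal (MvPolynomial σ K)) : Prop :=
  ∃ G : Set (σ →₀ ℕ), I = Ideal.span ((fun a => (monomial a (1 : K))) '' G)

/-- Exponent vectors of the minimal monomial generators of a monomial ideal. -/
def minimalMonGens {σ K : Type} [Field K] (I : Ideal (MvPolynomial σ K)) : Set (σ →₀ ℕ) :=
  {a | (monomial a (1 : K)) ∈ I ∧
    ∀ b : σ →₀ ℕ, (monomial b (1 : K)) ∈ I → b ≤ a → b = a}

/-- The support of a monomial ideal: the union of the supports of its
minimal monomial generators. -/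
def suppIdeal {σ K : Type} [Field K] (I : Ideal (MvPolynomial σ K)) : Set σ :=
  ⋃ a ∈ minimalMonGens I, (a.support : Set σ)

/-- `HasPowDivisor G k u`: the exponent vector `u` dominates a sum of `k` members of `G`, that is,
the monomial with exponent `u` lies in the `k`-th power of the monomial ideal generated by `G`. -/
def HasPowDivisor {σ : Type*} (G : Set (σ →₀ ℕ)) : ℕ → (σ →₀ ℕ) → Prop
  | 0, _ => True
  | k + 1, u => ∃ g ∈ G, g ≤ u ∧ HasPowDivisor G k (u - g)

namespace HasPowDivisor

variable {σ : Type*} {G : Set (σ →₀ ℕ)} {k l : ℕ} {u v : σ →₀ ℕ}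

theorem mono (h : HasPowDivisor G k u) (huv : u ≤ v) : HasPowDivisor G k v := by
  induction k generalizing u v with
  | zero => trivial
  | succ k ih =>
    obtain ⟨g, hg, hgu, hk⟩ := h
    exact ⟨g, hg, hgu.trans huv, ih hk (tsub_le_tsub_right huv g)⟩

theorem of_succ (h : HasPowDivisor G (k + 1) u) : HasPowDivisor G k u := by
  obtain ⟨g, -, -, hk⟩ := h
  exact hk.mono tsub_le_self

theorem antitone (h : HasPowDivisor G l u) (hkl : k ≤ l) : HasPowDivisor G k u := by
  induction hkl with
  | refl => exact h
  | step _ ih => exact ih h.of_succ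

theorem congr_of_eqOn {V : Set σ} (hG : ∀ g ∈ G, (g.support : Set σ) ⊆ V) (huv : Set.EqOn u v V)
    (h : HasPowDivisor G k u) : HasPowDivisor G k v := by
  induction k generalizing u v with
  | zero => trivial
  | succ k ih =>
    obtain ⟨g, hg, hgu, hk⟩ := h
    refine ⟨g, hg, fun x => ?_, ih (fun x hx => ?_) hk⟩
    · by_cases hx : g x = 0
      · simp [hx]
      · rw [← huv (hG g hg (by simpa using hx))]
        exact hgu x
    · simp [huv hx]

/-- Dividing by one variable loses at most one factor. -/
theorem of_succ_add_single {x : σ} (h : HasPowDivisor G (k + 1) (u + Finsupp.single x 1)) :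
    HasPowDivisor G k u := by
  classical
  induction k generalizing u with
  | zero => trivial
  | succ k ih =>
    obtain ⟨g, hg, hgu, hk⟩ := h
    by_cases hle : g ≤ u
    · refine ⟨g, hg, hle, ih ?_⟩
      rwa [← tsub_add_eq_add_tsub hle] at hk
    · refine hk.mono fun y => ?_
      have hx : u x < g x := by
        by_contra hx
        refine hle fun y => ?_
        have := hgu y
        rcases eq_or_ne x y with rfl | hy
        · omega
        · simpa [Finsupp.single_apply, hy] using this
      rcases eq_or_ne x y with rfl | hy
      · simp only [Finsupp.tsub_apply, Finsupp.add_apply, Finsupp.single_eq_same]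
        omega
      · simp [hy]

open scoped Classical in
theorem mul_le_sum [Fintype σ] {V : Set σ} {a : ℕ} (hG : ∀ g ∈ G, (g.support : Set σ) ⊆ V)
    (ha : ∀ g ∈ G, a ≤ g.degree) (h : HasPowDivisor G k u) :
    a * k ≤ ∑ x, if x ∈ V then u x else 0 := by
  induction k generalizing u with
  | zero => simp
  | succ k ih =>
    obtain ⟨g, hg, hgu, hk⟩ := h
    have hsum : (∑ x, if x ∈ V then u x else 0)
        = (∑ x, if x ∈ V then (u - g) x else 0) + g.degree := by
      rw [Finsupp.degree_eq_sum, ← Finset.sum_add_distrib]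
      refine Finset.sum_congr rfl fun x _ => ?_
      have := hgu x
      split_ifs with hx
      · simp only [Finsupp.tsub_apply]
        omega
      · have : g x = 0 := by
          by_contra h0
          exact hx (hG g hg (by simpa using h0))
        simp [this]
    have := ih hk
    have := ha g hg
    rw [hsum, mul_add, mul_one]
    omega

/-- Powers of a sum of monomial ideals with disjoint supports, read off monomial by monomial. -/
theorem iUnion_iff {ι : Type*} [Fintype ι] {G : ι → Set (σ →₀ ℕ)} {V : ι → Set σ}
    (hG : ∀ j, ∀ g ∈ G j, (g.support : Set σ) ⊆ V j)
    (hV : Pairwise fun i j => Disjoint (V i) (V j)) :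
    HasPowDivisor (⋃ j, G j) k u ↔ ∃ m : ι → ℕ, ∑ j, m j = k ∧ ∀ j, HasPowDivisor (G j) (m j) u := by
  classical
  induction k generalizing u with
  | zero => exact iff_of_true trivial ⟨0, by simp, fun _ => trivial⟩
  | succ k ih =>
    constructor
    · rintro ⟨g, hg, hgu, hk⟩
      obtain ⟨j, hj⟩ := Set.mem_iUnion.1 hg
      obtain ⟨m, hm, hmG⟩ := ih.1 hk
      refine ⟨m + Pi.single j 1, by simp [Finset.sum_add_distrib, hm], fun i => ?_⟩
      rcases eq_or_ne i j with rfl | hi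
      · simpa using ⟨g, hj, hgu, hmG i⟩
      · simpa [hi] using (hmG i).mono tsub_le_self
    · rintro ⟨m, hm, hmG⟩
      obtain ⟨j, -, hj⟩ : ∃ j ∈ Finset.univ, m j ≠ 0 := by
        apply Finset.exists_ne_zero_of_sum_ne_zero
        omega
      obtain ⟨l, hl⟩ := Nat.exists_eq_succ_of_ne_zero hj
      have hj' := hmG j
      rw [hl] at hj'
      obtain ⟨g, hg, hgu, hk⟩ := hj'
      refine ⟨g, Set.mem_iUnion.2 ⟨j, hg⟩, hgu, ih.2 ⟨Function.update m j l, ?_, fun i => ?_⟩⟩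
      · have h₁ := Finset.add_sum_erase Finset.univ m (Finset.mem_univ j)
        rw [Finset.sum_update_of_mem (Finset.mem_univ j), ← Finset.erase_eq]
        omega
      · rcases eq_or_ne i j with rfl | hi
        · simpa using hk
        · rw [Function.update_of_ne hi]
          refine (hmG i).congr_of_eqOn (hG i) fun x hx => ?_
          have : g x = 0 := by
            by_contra h0
            exact Set.disjoint_left.1 (hV hi) hx (hG j g hg (by simpa using h0))
          simp [this]

/-- A monomial outside the `k`-th power that is pushed into it by a variable from each block
has large degree. -/
theorem mul_le_degree_of_iUnion {ι : Type*} [Fintype ι] [Nonempty ι] [Fintype σ]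
    {G : ι → Set (σ →₀ ℕ)} {V : ι → Set σ} {a : ℕ} (hG : ∀ j, ∀ g ∈ G j, (g.support : Set σ) ⊆ V j)
    (hV : Pairwise fun i j => Disjoint (V i) (V j)) (ha : ∀ j, ∀ g ∈ G j, a ≤ g.degree)
    (hu : ¬ HasPowDivisor (⋃ j, G j) k u)
    (hx : ∀ j, ∃ x ∈ V j, HasPowDivisor (⋃ j, G j) k (u + Finsupp.single x 1)) :
    a * (k + Fintype.card ι) ≤ u.degree + Fintype.card ι + a := by
  classical
  let M : ι → ℕ := fun i => Nat.findGreatest (fun m => HasPowDivisor (G i) m u) k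
  have hM : ∀ i, HasPowDivisor (G i) (M i) u := fun i =>
    Nat.findGreatest_spec (P := fun m => HasPowDivisor (G i) m u) (Nat.zero_le k) trivial
  have hmax : ∀ i m, m ≤ k → HasPowDivisor (G i) m u → m ≤ M i := fun i m hmk hm =>
    Nat.le_findGreatest hmk hm
  have hS : ∑ i, M i < k := by
    by_contra! hle
    exact hu (((iUnion_iff hG hV).2 ⟨M, rfl, hM⟩).antitone hle)
  have hblock : ∀ j, a * (k + M j) ≤
      (∑ x, if x ∈ V j then u x else 0) + 1 + a * ∑ i, M i := by
    intro j
    obtain ⟨x, hxV, hxk⟩ := hx j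
    obtain ⟨m, hm, hmG⟩ := (iUnion_iff hG hV).1 hxk
    have hle : ∀ i ∈ Finset.univ.erase j, m i ≤ M i := by
      intro i hi
      have hij := Finset.ne_of_mem_erase hi
      refine hmax i _ (hm ▸ Finset.single_le_sum_of_canonicallyOrdered (Finset.mem_univ i)) ?_
      refine (hmG i).congr_of_eqOn (hG i) fun y hy => ?_
      have hxy : x ≠ y := by
        rintro rfl
        exact Set.disjoint_left.1 (hV hij) hy hxV
      simp [hxy.symm]
    have hsum := Finset.sum_le_sum hle
    have h₁ := Finset.add_sum_erase Finset.univ m (Finset.mem_univ j)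
    have h₂ := Finset.add_sum_erase Finset.univ M (Finset.mem_univ j)
    have hj : k + M j ≤ m j + ∑ i, M i := by omega
    have hdeg := (hmG j).mul_le_sum (hG j) (ha j)
    have hadd : (∑ y, if y ∈ V j then (u + Finsupp.single x 1 : σ →₀ ℕ) y else 0) =
        (∑ y, if y ∈ V j then u y else 0) + 1 := by
      have : (1 : ℕ) = ∑ y, if y = x then 1 else 0 := by simp
      rw [this, ← Finset.sum_add_distrib]
      refine Finset.sum_congr rfl fun y _ => ?_
      rcases eq_or_ne y x with rfl | hy
      · simp [hxV]
      · simp [hy]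
    rw [hadd] at hdeg
    have := Nat.mul_le_mul_left a hj
    rw [mul_add a (m j)] at this
    omega
  have hdisj : ∑ j, (∑ x, if x ∈ V j then u x else 0) ≤ u.degree := by
    rw [Finset.sum_comm, Finsupp.degree_eq_sum]
    refine Finset.sum_le_sum fun x _ => ?_
    by_cases h : ∃ j, x ∈ V j
    · obtain ⟨j, hj⟩ := h
      rw [Finset.sum_eq_single j]
      · simp [hj]
      · exact fun i _ hi => if_neg fun hxi => Set.disjoint_left.1 (hV hi) hxi hj
      · simp
    · push Not at h
      simp [h]
  have htot := Finset.sum_le_sum fun j (_ : j ∈ Finset.univ) => hblock j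
  simp only [← Finset.mul_sum, Finset.sum_add_distrib, Finset.sum_const, Finset.card_univ,
    smul_eq_mul, mul_one] at htot
  obtain ⟨c, hc⟩ := Nat.exists_eq_add_of_lt hS
  obtain ⟨r, hr⟩ := Nat.exists_eq_add_of_lt (Fintype.card_pos (α := ι))
  rw [hr] at htot ⊢
  generalize ∑ i, M i = S at *
  subst hc
  nlinarith [Nat.zero_le (a * c * r)]

/-- Monomials realizing a prime colon ideal block by block multiply to one realizing the sum of
these primes. -/
theorem exists_iUnion_iff {ι : Type*} [Fintype ι] [Fintype σ] {G : ι → Set (σ →₀ ℕ)}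
    {V T : ι → Set σ} {κ : ι → ℕ} {u : ι → σ →₀ ℕ}
    (hG : ∀ j, ∀ g ∈ G j, (g.support : Set σ) ⊆ V j)
    (hV : Pairwise fun i j => Disjoint (V i) (V j)) (hT : ∀ j, (T j).Nonempty)
    (hu : ∀ j w, HasPowDivisor (G j) (κ j + 1) (u j + w) ↔ ∃ x ∈ w.support, x ∈ T j) :
    ∃ v : σ →₀ ℕ, v.degree ≤ ∑ j, (u j).degree ∧
      ∀ w, HasPowDivisor (⋃ j, G j) (∑ j, κ j + 1) (v + w) ↔
        ∃ x ∈ w.support, x ∈ ⋃ j, T j := by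
  classical
  let v : σ →₀ ℕ := Finsupp.equivFunOnFinite.symm fun x => ∑ j, if x ∈ V j then u j x else 0
  have hv : ∀ j, Set.EqOn v (u j) (V j) := by
    intro j x hx
    change (∑ i, if x ∈ V i then u i x else 0) = u j x
    rw [Finset.sum_eq_single j]
    · simp [hx]
    · exact fun i _ hi => if_neg fun hxi => Set.disjoint_left.1 (hV hi) hxi hx
    · simp
  have hvw : ∀ j m w, HasPowDivisor (G j) m (v + w) ↔ HasPowDivisor (G j) m (u j + w) := by
    intro j m w
    have h : Set.EqOn (v + w) (u j + w) (V j) := fun x hx => by simp [hv j hx]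
    exact ⟨congr_of_eqOn (hG j) h, congr_of_eqOn (hG j) h.symm⟩
  refine ⟨v, ?_, fun w => ?_⟩
  · simp only [Finsupp.degree_eq_sum]
    rw [Finset.sum_comm]
    refine Finset.sum_le_sum fun x _ => Finset.sum_le_sum fun j _ => ?_
    split_ifs <;> simp
  · rw [iUnion_iff hG hV]
    simp only [hvw]
    constructor
    · rintro ⟨m, hm, hmG⟩
      by_contra! hw
      have hle : ∀ j ∈ Finset.univ, m j ≤ κ j := by
        intro j _
        by_contra! hj
        obtain ⟨x, hx, hxT⟩ := (hu j w).1 ((hmG j).antitone hj)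
        exact hw x hx (Set.mem_iUnion.2 ⟨j, hxT⟩)
      have := Finset.sum_le_sum hle
      omega
    · rintro ⟨x, hx, hxT⟩
      obtain ⟨j, hj⟩ := Set.mem_iUnion.1 hxT
      refine ⟨κ + Pi.single j 1, by simp [Finset.sum_add_distrib], fun i => ?_⟩
      rcases eq_or_ne i j with rfl | hi
      · simpa using (hu i w).2 ⟨x, hx, hj⟩
      · obtain ⟨y, hy⟩ := hT i
        have := ((hu i (Finsupp.single y 1)).2 ⟨y, by simp, hy⟩).of_succ_add_single
        simpa [hi] using this.mono le_self_add

end HasPowDivisor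

section MonomialIdeal

variable {σ K : Type} [Field K]

theorem span_monomial_pow (G : Set (σ →₀ ℕ)) (k : ℕ) :
    Ideal.span ((fun a => monomial a (1 : K)) '' G) ^ k =
      Ideal.span ((fun a => monomial a (1 : K)) '' {u | HasPowDivisor G k u}) := by
  induction k with
  | zero =>
    rw [pow_zero, Ideal.one_eq_top, eq_comm, Ideal.eq_top_iff_one]
    exact Ideal.subset_span ⟨0, trivial, rfl⟩
  | succ k ih =>
    rw [pow_succ, ih]
    apply le_antisymm
    · rw [Ideal.span_mul_span', Ideal.span_le]
      rintro _ ⟨_, ⟨u, hu, rfl⟩, _, ⟨g, hg, rfl⟩, rfl⟩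
      refine Ideal.subset_span ⟨u + g, ⟨g, hg, le_add_self, ?_⟩, by simp [monomial_mul]⟩
      simpa using hu
    · rw [Ideal.span_le]
      rintro _ ⟨u, ⟨g, hg, hgu, hk⟩, rfl⟩
      have : monomial u (1 : K) = monomial (u - g) 1 * monomial g 1 := by
        rw [monomial_mul, tsub_add_cancel_of_le hgu, one_mul]
      simp only [this]
      exact Ideal.mul_mem_mul (Ideal.subset_span ⟨_, hk, rfl⟩) (Ideal.subset_span ⟨g, hg, rfl⟩)

theorem mem_span_monomial_pow {G : Set (σ →₀ ℕ)} {k : ℕ} {f : MvPolynomial σ K} :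
    f ∈ Ideal.span ((fun a => monomial a (1 : K)) '' G) ^ k ↔
      ∀ u ∈ f.support, HasPowDivisor G k u := by
  rw [span_monomial_pow, mem_ideal_span_monomial_image]
  exact forall₂_congr fun u _ => ⟨fun ⟨s, hs, hsu⟩ => hs.mono hsu, fun h => ⟨u, h, le_rfl⟩⟩

theorem mul_monomial_mem_span_monomial_pow {G : Set (σ →₀ ℕ)} {k : ℕ} {f : MvPolynomial σ K}
    {w : σ →₀ ℕ} :
    f * monomial w 1 ∈ Ideal.span ((fun a => monomial a (1 : K)) '' G) ^ k ↔
      ∀ u ∈ f.support, HasPowDivisor G k (u + w) := by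
  rw [mem_span_monomial_pow]
  constructor
  · intro h u hu
    exact h _ (by simpa [coeff_mul_monomial] using hu)
  · intro h u hu
    rw [mem_support_iff, coeff_mul_monomial'] at hu
    split_ifs at hu with hwu
    · simpa [tsub_add_cancel_of_le hwu] using h (u - w) (by simpa using hu)
    · exact absurd rfl hu

theorem Ideal.IsPrime.monomial_mem_iff {P : Ideal (MvPolynomial σ K)} (hP : P.IsPrime)
    {w : σ →₀ ℕ} : monomial w (1 : K) ∈ P ↔ ∃ x ∈ w.support, X x ∈ P := by
  rw [monomial_eq, C_1, one_mul, Finsupp.prod, hP.prod_mem_iff]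
  refine exists_congr fun x => and_congr_right fun hx => ?_
  exact hP.pow_mem_iff_mem _ (Nat.pos_of_ne_zero (Finsupp.mem_support_iff.1 hx))

theorem span_X_image_isPrime (T : Set σ) :
    (Ideal.span (X '' T : Set (MvPolynomial σ K))).IsPrime := by
  classical
  set J := Ideal.span (X '' T : Set (MvPolynomial σ K)) with hJ
  let φ : MvPolynomial σ K →ₐ[K] MvPolynomial σ K := aeval fun i => if i ∈ T then 0 else X i
  have hφ : (Ideal.Quotient.mkₐ K J).comp φ = Ideal.Quotient.mkₐ K J := by
    ext i
    by_cases hi : i ∈ T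
    · have : Ideal.Quotient.mk J (X i) = 0 :=
        Ideal.Quotient.eq_zero_iff_mem.2 (Ideal.subset_span ⟨i, hi, rfl⟩)
      simp [φ, hi, this]
    · simp [φ, hi]
  have hker : J = RingHom.ker φ := by
    apply le_antisymm
    · rw [hJ, Ideal.span_le]
      rintro _ ⟨i, hi, rfl⟩
      simp [φ, hi]
    · intro f hf
      have := DFunLike.congr_fun hφ f
      rw [AlgHom.comp_apply, (RingHom.mem_ker).1 hf, map_zero] at this
      exact Ideal.Quotient.eq_zero_iff_mem.1 this.symm
  rw [hker]
  exact RingHom.ker_isPrime φ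

/-- A prime colon ideal of a power of a monomial ideal is, on monomials, the colon ideal by some
monomial of the same degree. -/
theorem exists_monomial_of_colon_eq {G : Set (σ →₀ ℕ)} {k d : ℕ} {f : MvPolynomial σ K}
    {P : Ideal (MvPolynomial σ K)} (hP : P.IsPrime) (hf : f.IsHomogeneous d)
    (h : (Ideal.span ((fun a => monomial a (1 : K)) '' G) ^ k).colon (Ideal.span {f}) = P) :
    ∃ u : σ →₀ ℕ, u.degree = d ∧
      ∀ w, HasPowDivisor G k (u + w) ↔ ∃ x ∈ w.support, (X x : MvPolynomial σ K) ∈ P := by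
  have hcolon : ∀ w : σ →₀ ℕ, monomial w (1 : K) ∈ P ↔
      ∀ u ∈ f.support, HasPowDivisor G k (u + w) := by
    intro w
    rw [← h, Ideal.mem_colon_span_singleton, mul_comm, mul_monomial_mem_span_monomial_pow]
  obtain ⟨u, hu, hk⟩ : ∃ u ∈ f.support, ∀ w, HasPowDivisor G k (u + w) →
      ∃ x ∈ w.support, (X x : MvPolynomial σ K) ∈ P := by
    by_contra! hcon
    choose! w hw hwP using hcon
    have hmem : monomial (∑ u ∈ f.support, w u) (1 : K) ∈ P := by
      rw [hcolon]
      intro u hu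
      exact (hw u hu).mono (by gcongr; exact Finset.single_le_sum_of_canonicallyOrdered hu)
    have hprod : monomial (∑ u ∈ f.support, w u) (1 : K) = ∏ u ∈ f.support, monomial (w u) 1 := by
      simpa using monomial_sum_one f.support w
    rw [hprod, hP.prod_mem_iff] at hmem
    obtain ⟨u, hu, huP⟩ := hmem
    obtain ⟨x, hx, hxP⟩ := hP.monomial_mem_iff.1 huP
    exact hwP u hu x hx hxP
  refine ⟨u, ?_, fun w => ⟨hk w, fun hx => (hcolon w).1 (hP.monomial_mem_iff.2 hx) u hu⟩⟩
  rw [Finsupp.degree_eq_weight_one]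
  exact hf (mem_support_iff.1 hu)

/-- A monomial ideal is generated by its minimal monomial generators. -/
theorem IsMonomialIdeal.eq_span_minimalMonGens [Finite σ] {I : Ideal (MvPolynomial σ K)}
    (hI : IsMonomialIdeal I) :
    I = Ideal.span ((fun a => monomial a (1 : K)) '' minimalMonGens I) := by
  apply le_antisymm
  · obtain ⟨G, hG⟩ := hI
    intro f hf
    rw [mem_ideal_span_monomial_image]
    intro u hu
    rw [hG, mem_ideal_span_monomial_image] at hf
    obtain ⟨g, hg, hgu⟩ := hf u hu
    obtain ⟨b, hbg, hb⟩ := exists_minimal_le_of_wellFoundedLT (fun b => monomial b (1 : K) ∈ I) g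
      (hG ▸ Ideal.subset_span ⟨g, hg, rfl⟩)
    exact ⟨b, ⟨hb.prop, fun c hc hcb => le_antisymm hcb (hb.le_of_le hc hcb)⟩, hbg.trans hgu⟩
  · rw [Ideal.span_le]
    rintro _ ⟨u, hu, rfl⟩
    exact hu.1

theorem alphaDeg_le_degree {I : Ideal (MvPolynomial σ K)} {u : σ →₀ ℕ}
    (hu : monomial u (1 : K) ∈ I) : alphaDeg I ≤ u.degree :=
  Nat.sInf_le ⟨_, hu, by simp, isHomogeneous_monomial _ rfl⟩

theorem alphaDeg_pos {I : Ideal (MvPolynomial σ K)} (hI : I ≠ ⊤) {u : σ →₀ ℕ}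
    (hu : monomial u (1 : K) ∈ I) : 0 < alphaDeg I := by
  rw [Nat.pos_iff_ne_zero]
  intro h0
  have hne : {d : ℕ | ∃ f ∈ I, f ≠ 0 ∧ MvPolynomial.IsHomogeneous f d}.Nonempty :=
    ⟨_, _, hu, by simp, isHomogeneous_monomial _ rfl⟩
  obtain ⟨f, hfI, hf0, hf⟩ := Nat.sInf_mem hne
  have hdeg : f.totalDegree = 0 := (hf.totalDegree hf0).trans h0
  rw [totalDegree_eq_zero_iff_eq_C] at hdeg
  have hc : coeff 0 f ≠ 0 := fun h => hf0 (by rw [hdeg, h, C_0])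
  exact hI (Ideal.eq_top_of_isUnit_mem _ hfI (hdeg ▸ (isUnit_iff_ne_zero.2 hc).map C))

theorem mem_assOf_of_colon_eq [Finite σ] {L P : Ideal (MvPolynomial σ K)} (hP : P.IsPrime)
    {f : MvPolynomial σ K} (h : L.colon (Ideal.span {f}) = P) : P ∈ assOf L := by
  refine (isAssociatedPrime_iff).2 ⟨hP, Ideal.Quotient.mk L f, ?_⟩
  ext r
  rw [← h, Ideal.mem_colon_span_singleton, Submodule.mem_colon_singleton, Submodule.mem_bot,
    ← Ideal.Quotient.eq_zero_iff_mem, map_mul]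
  rfl

theorem le_of_pow_colon_eq {I P : Ideal (MvPolynomial σ K)} (hP : P.IsPrime) {k : ℕ}
    {f : MvPolynomial σ K} (h : (I ^ k).colon (Ideal.span {f}) = P) : I ≤ P := by
  refine hP.le_of_pow_le (n := k) fun r hr => ?_
  rw [← h, Ideal.mem_colon_span_singleton]
  exact Ideal.mul_mem_right _ _ hr

theorem exists_X_mem_of_le {I P : Ideal (MvPolynomial σ K)} (hP : P.IsPrime) (hle : I ≤ P)
    (hI : (minimalMonGens I).Nonempty) : ∃ x ∈ suppIdeal I, (X x : MvPolynomial σ K) ∈ P := by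
  obtain ⟨g, hg⟩ := hI
  obtain ⟨x, hx, hxP⟩ := hP.monomial_mem_iff.1 (hle hg.1)
  exact ⟨x, Set.mem_biUnion hg hx, hxP⟩

theorem colon_monomial_eq_span_X {G : Set (σ →₀ ℕ)} {k : ℕ} {u : σ →₀ ℕ} {T : Set σ}
    (h : ∀ w, HasPowDivisor G k (u + w) ↔ ∃ x ∈ w.support, x ∈ T) :
    (Ideal.span ((fun a => monomial a (1 : K)) '' G) ^ k).colon
      (Ideal.span {monomial u (1 : K)}) = Ideal.span (X '' T) := by
  ext f
  rw [Ideal.mem_colon_span_singleton, mul_monomial_mem_span_monomial_pow, mem_ideal_span_X_image]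
  refine forall₂_congr fun w _ => ?_
  rw [add_comm, h]
  simp [and_comm]

end MonomialIdeal

/-- Theorem 5.2, equal initial degrees: let `I_1,…,I_t` be nonzero proper
monomial ideals with pairwise disjoint supports and equal initial degrees
`α(I_1) = ⋯ = α(I_t) = a`, such that `v(I_j^k) = a·k − 1` for all `k ≫ 0`.  Then for all
`k ≫ 0`, `v((I_1+⋯+I_t)^k) = a·k + ((t−1)·a − t)`. -/
theorem stmt10 {K : Type} [Field K] {n t : ℕ} (ht : 0 < t)
    (I : Fin t → Ideal (MvPolynomial (Fin n) K))
    (hnz : ∀ j, I j ≠ ⊥) (hpr : ∀ j, I j ≠ ⊤) (hmon : ∀ j, IsMonomialIdeal (I j))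
    (hsupp : Pairwise fun i j => Disjoint (suppIdeal (I i)) (suppIdeal (I j)))
    (a : ℕ) (ha : ∀ j, alphaDeg (I j) = a)
    (hv : ∀ j, ∃ kj : ℕ, ∀ k : ℕ, kj ≤ k → vnumber (I j ^ k) = a * k - 1) :
    ∃ k₀ : ℕ, ∀ k : ℕ, k₀ ≤ k →
      (vnumber ((∑ j, I j) ^ k) : ℤ) = (a : ℤ) * k + (((t : ℤ) - 1) * a - t) := by
  set G : Fin t → Set (Fin n →₀ ℕ) := fun j => minimalMonGens (I j)
  set V : Fin t → Set (Fin n) := fun j => suppIdeal (I j)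
  have hI : ∀ j, I j = Ideal.span ((fun a => monomial a (1 : K)) '' G j) := fun j =>
    (hmon j).eq_span_minimalMonGens
  have hne : ∀ j, (G j).Nonempty := by
    intro j
    rw [Set.nonempty_iff_ne_empty]
    intro h
    exact hnz j (by rw [hI j, h, Set.image_empty, Ideal.span_empty])
  have hG : ∀ j, ∀ g ∈ G j, (g.support : Set (Fin n)) ⊆ V j := fun j g hg =>
    Set.subset_biUnion_of_mem (u := fun g : Fin n →₀ ℕ => (g.support : Set (Fin n))) hg
  have hdeg : ∀ j, ∀ g ∈ G j, a ≤ g.degree := fun j g hg => ha j ▸ alphaDeg_le_degree hg.1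
  have hapos : 0 < a := by
    obtain ⟨g, hg⟩ := hne ⟨0, ht⟩
    exact ha ⟨0, ht⟩ ▸ alphaDeg_pos (hpr _) hg.1
  have hL : ∑ j, I j = Ideal.span ((fun a => monomial a (1 : K)) '' ⋃ j, G j) := by
    rw [Set.image_iUnion, Ideal.span_iUnion, Ideal.sum_eq_sup, Finset.sup_univ_eq_iSup]
    exact iSup_congr hI
  have hIL : ∀ j, I j ≤ ∑ j, I j := by
    intro j
    rw [Ideal.sum_eq_sup]
    exact Finset.le_sup (f := I) (Finset.mem_univ j)
  have : Nonempty (Fin t) := ⟨⟨0, ht⟩⟩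
  choose N hN using hv
  set B := ∑ j, N j + 1 with hB
  refine ⟨t * B + 1, fun k hk => ?_⟩
  obtain ⟨κ, hκB, hκk⟩ : ∃ κ : Fin t → ℕ, (∀ j, B ≤ κ j) ∧ ∑ j, κ j + 1 = k := by
    refine ⟨fun j => B + Pi.single (M := fun _ => ℕ) ⟨0, ht⟩ (k - 1 - t * B) j,
      fun j => le_self_add, ?_⟩
    simp only [Finset.sum_add_distrib, Finset.sum_const, Finset.card_univ, Fintype.card_fin,
      smul_eq_mul, Finset.sum_pi_single', Finset.mem_univ, if_true]
    omega
  have hwit : ∀ j, ∃ (u : Fin n →₀ ℕ) (T : Set (Fin n)), u.degree + 1 = a * (κ j + 1) ∧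
      T.Nonempty ∧ ∀ w, HasPowDivisor (G j) (κ j + 1) (u + w) ↔ ∃ x ∈ w.support, x ∈ T := by
    intro j
    have hNj : N j ≤ ∑ i, N i := Finset.single_le_sum_of_canonicallyOrdered (Finset.mem_univ j)
    have hvj := hN j (κ j + 1) (by have := hκB j; omega)
    have hgt : 2 ≤ a * (κ j + 1) := by
      have := hκB j
      nlinarith
    have hpos : 0 < vnumber (I j ^ (κ j + 1)) := by omega
    obtain ⟨P, hP, f, hf, hcolon⟩ := Nat.sInf_mem (Nat.nonempty_of_pos_sInf hpos)
    have hPp : P.IsPrime := IsAssociatedPrime.isPrime hP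
    obtain ⟨x, -, hx⟩ := exists_X_mem_of_le hPp (le_of_pow_colon_eq hPp hcolon) (hne j)
    rw [hI j] at hcolon
    obtain ⟨u, hud, hu⟩ := exists_monomial_of_colon_eq hPp hf hcolon
    refine ⟨u, {x | X x ∈ P}, ?_, ⟨x, hx⟩, hu⟩
    change u.degree = vnumber (I j ^ (κ j + 1)) at hud
    omega
  choose u T hud hT hu using hwit
  obtain ⟨v, hvd, hv⟩ := HasPowDivisor.exists_iUnion_iff hG hsupp hT hu
  rw [hκk] at hv
  have hmem : v.degree ∈ {d : ℕ | ∃ p ∈ assOf ((∑ j, I j) ^ k), ∃ f : MvPolynomial (Fin n) K,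
      f.IsHomogeneous d ∧ ((∑ j, I j) ^ k).colon (Ideal.span {f}) = p} := by
    have hcolon := colon_monomial_eq_span_X (K := K) hv
    rw [← hL] at hcolon
    exact ⟨_, mem_assOf_of_colon_eq (span_X_image_isPrime _) hcolon, _,
      isHomogeneous_monomial _ rfl, hcolon⟩
  have hupper : vnumber ((∑ j, I j) ^ k) + t + a ≤ a * (k + t) := by
    have h₁ : vnumber ((∑ j, I j) ^ k) ≤ v.degree := Nat.sInf_le hmem
    have h₂ : ∑ j, ((u j).degree + 1) = a * ∑ j, (κ j + 1) := by
      rw [Finset.mul_sum]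
      exact Finset.sum_congr rfl fun j _ => hud j
    simp only [Finset.sum_add_distrib, Finset.sum_const, Finset.card_univ, Fintype.card_fin,
      smul_eq_mul, mul_one] at h₂
    have h₃ : a * (k + t) = a * (∑ j, κ j + t) + a := by rw [← hκk]; ring
    omega
  have hlower : a * (k + t) ≤ vnumber ((∑ j, I j) ^ k) + t + a := by
    obtain ⟨P, hP, f, hf, hcolon⟩ := Nat.sInf_mem ⟨_, hmem⟩
    have hPp : P.IsPrime := IsAssociatedPrime.isPrime hP
    have hX := fun j =>
      exists_X_mem_of_le hPp ((hIL j).trans (le_of_pow_colon_eq hPp hcolon)) (hne j)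
    rw [hL] at hcolon
    obtain ⟨u, hud, hu⟩ := exists_monomial_of_colon_eq hPp hf hcolon
    have := HasPowDivisor.mul_le_degree_of_iUnion hG hsupp hdeg (k := k) (u := u)
      (fun h => by simpa using (hu 0).1 (by simpa using h))
      (fun j => by
        obtain ⟨x, hxV, hxP⟩ := hX j
        exact ⟨x, hxV, (hu _).2 ⟨x, by simp, hxP⟩⟩)
    rwa [hud, Fintype.card_fin] at this
  have := le_antisymm hupper hlower
  zify at this
  linarith
end
end

section
/- Let I_1,…,I_t ⊂ S = K[x_1,…,x_n] be nonzero proper monomial ideals with pairwise disjoint supports. Suppose that for each j = 1,…,t one has v(I_j^k) = α(I_j)·k − 1 for all k ≥ 1 (i.e., the v-function of each I_j is linear from the start, with v-stability index 1). Then for every k ≥ 1, v((I_1 + ⋯ + I_t)^k) = (min_{1≤j≤t} α(I_j))·k + ( ∑_{j=1}^t α(I_j) − min_{1≤j≤t} α(I_j) − t ). -/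
open MvPolynomial

noncomputable section

section PrimeWitness

variable {σ K : Type} [Field K]

/-- Exponent vectors of the monomials lying in an ideal. -/
def monExponents (L : Ideal (MvPolynomial σ K)) : Set (σ →₀ ℕ) :=
  {u | monomial u (1 : K) ∈ L}

theorem mem_monExponents {L : Ideal (MvPolynomial σ K)} {u : σ →₀ ℕ} :
    u ∈ monExponents L ↔ monomial u (1 : K) ∈ L := Iff.rfl

/-- `u` lies outside `U`, and `{w | u + w ∈ U}` is prime as a set of exponent vectors. -/
def IsPrimeWitness (U : Set (σ →₀ ℕ)) (u : σ →₀ ℕ) : Prop :=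
  u ∉ U ∧ ∀ w w', u + w + w' ∈ U → u + w ∈ U ∨ u + w' ∈ U

theorem add_mem_monExponents {L : Ideal (MvPolynomial σ K)} {u : σ →₀ ℕ}
    (hu : u ∈ monExponents L) (w : σ →₀ ℕ) : u + w ∈ monExponents L := by
  have h := L.mul_mem_right (monomial w (1 : K)) hu
  rwa [monomial_mul, one_mul] at h

theorem monExponents_of_le {L : Ideal (MvPolynomial σ K)} {u v : σ →₀ ℕ}
    (hu : u ∈ monExponents L) (huv : u ≤ v) : v ∈ monExponents L := by
  obtain ⟨w, rfl⟩ := exists_add_of_le huv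
  exact add_mem_monExponents hu w

theorem mem_of_support_subset_monExponents {L : Ideal (MvPolynomial σ K)}
    {f : MvPolynomial σ K} (h : ∀ u ∈ f.support, u ∈ monExponents L) : f ∈ L := by
  rw [f.as_sum]
  refine L.sum_mem fun u hu => ?_
  have := L.mul_mem_left (C (coeff u f)) (h u hu)
  rwa [C_mul_monomial, mul_one] at this

theorem IsMonomialIdeal.mem_iff {L : Ideal (MvPolynomial σ K)} (hL : IsMonomialIdeal L)
    {f : MvPolynomial σ K} : f ∈ L ↔ ∀ u ∈ f.support, u ∈ monExponents L := by
  refine ⟨fun hf u hu => ?_, mem_of_support_subset_monExponents⟩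
  obtain ⟨G, rfl⟩ := hL
  obtain ⟨g, hg, hgu⟩ := mem_ideal_span_monomial_image.1 hf u hu
  exact monExponents_of_le (Ideal.subset_span ⟨g, hg, rfl⟩) hgu

theorem IsMonomialIdeal.eq_span {L : Ideal (MvPolynomial σ K)} (hL : IsMonomialIdeal L) :
    L = Ideal.span ((fun a => monomial a (1 : K)) '' monExponents L) := by
  apply le_antisymm
  · intro f hf
    exact mem_ideal_span_monomial_image.2 fun u hu => ⟨u, hL.mem_iff.1 hf u hu, le_rfl⟩
  · rw [Ideal.span_le]
    rintro _ ⟨a, ha, rfl⟩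
    exact ha

theorem mem_monExponents_span {G : Set (σ →₀ ℕ)} {u : σ →₀ ℕ} :
    u ∈ monExponents (Ideal.span ((fun a => monomial a (1 : K)) '' G)) ↔ ∃ g ∈ G, g ≤ u := by
  classical
  rw [mem_monExponents, mem_ideal_span_monomial_image]
  simp [support_monomial]

theorem mem_support_mul_monomial {f : MvPolynomial σ K} {u v : σ →₀ ℕ}
    (hv : v ∈ (f * monomial u 1).support) : ∃ w ∈ f.support, v = w + u := by
  classical
  rw [mem_support_iff, coeff_mul_monomial'] at hv
  split_ifs at hv with h
  · exact ⟨v - u, by simpa using hv, (tsub_add_cancel_of_le h).symm⟩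
  · exact absurd rfl hv

theorem isPrime_span_X_image (s : Set σ) :
    (Ideal.span (X '' s) : Ideal (MvPolynomial σ K)).IsPrime := by
  classical
  let φ : MvPolynomial σ K →ₐ[K] MvPolynomial σ K := aeval fun i => if i ∈ s then 0 else X i
  have hφ : ∀ f, Ideal.Quotient.mkₐ K (Ideal.span (X '' s)) (φ f) =
      Ideal.Quotient.mkₐ K (Ideal.span (X '' s)) f := by
    refine fun f => DFunLike.congr_fun
      (f := (Ideal.Quotient.mkₐ K (Ideal.span (X '' s))).comp φ) (algHom_ext fun i => ?_) f
    by_cases hi : i ∈ s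
    · have : (Ideal.Quotient.mkₐ K (Ideal.span (X '' s))) (X i : MvPolynomial σ K) = 0 :=
        Ideal.Quotient.eq_zero_iff_mem.2 (Ideal.subset_span ⟨i, hi, rfl⟩)
      simp [φ, hi, this]
    · simp [φ, hi]
  have hker : Ideal.span (X '' s) = RingHom.ker φ := by
    apply le_antisymm
    · rw [Ideal.span_le]
      rintro _ ⟨i, hi, rfl⟩
      simp [φ, hi]
    · intro f hf
      rw [RingHom.mem_ker] at hf
      have := hφ f
      rw [hf, map_zero] at this
      exact Ideal.Quotient.eq_zero_iff_mem.1 this.symm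
  rw [hker]
  exact RingHom.ker_isPrime _

theorem IsPrimeWitness.exists_single {L : Ideal (MvPolynomial σ K)} {u : σ →₀ ℕ}
    (hu : IsPrimeWitness (monExponents L) u) {w : σ →₀ ℕ} (hw : u + w ∈ monExponents L) :
    ∃ i, w i ≠ 0 ∧ u + Finsupp.single i 1 ∈ monExponents L := by
  induction hd : w.degree generalizing w with
  | zero =>
    rw [Finsupp.degree_eq_zero_iff] at hd
    subst hd
    exact absurd (by simpa using hw) hu.1
  | succ d ih =>
    obtain ⟨i, hi⟩ : ∃ i, w i ≠ 0 := by
      by_contra! h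
      have : w = 0 := Finsupp.ext h
      simp [this] at hd
    have hle : Finsupp.single i 1 ≤ w := by
      simpa [Nat.one_le_iff_ne_zero] using hi
    obtain ⟨w', rfl⟩ := exists_add_of_le hle
    rw [← add_assoc] at hw
    rcases hu.2 _ _ hw with h | h
    · exact ⟨i, hi, h⟩
    · obtain ⟨k, hk, hk'⟩ := ih h (by rw [map_add, Finsupp.degree_single] at hd; omega)
      exact ⟨k, by simp [hk], hk'⟩

theorem IsPrimeWitness.colon_eq {L : Ideal (MvPolynomial σ K)} (hL : IsMonomialIdeal L)
    {u : σ →₀ ℕ} (hu : IsPrimeWitness (monExponents L) u) :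
    L.colon (Ideal.span {monomial u (1 : K)}) =
      Ideal.span (X '' {i | u + Finsupp.single i 1 ∈ monExponents L}) := by
  classical
  ext f
  rw [Ideal.span, Submodule.mem_colon_span_singleton, smul_eq_mul, mem_ideal_span_X_image]
  constructor
  · intro hf w hw
    have hmem : u + w ∈ monExponents L := by
      rw [add_comm]
      apply hL.mem_iff.1 hf
      rw [mem_support_iff, coeff_mul_monomial]
      simpa using hw
    obtain ⟨i, hi, hi'⟩ := hu.exists_single hmem
    exact ⟨i, hi', hi⟩
  · intro h
    apply mem_of_support_subset_monExponents
    intro v hv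
    obtain ⟨w, hw, rfl⟩ := mem_support_mul_monomial hv
    obtain ⟨i, hi, hwi⟩ := h w hw
    refine monExponents_of_le hi ?_
    rw [add_comm w]
    gcongr
    simpa [Nat.one_le_iff_ne_zero] using hwi

theorem exists_isPrimeWitness_of_isPrime_colon {L : Ideal (MvPolynomial σ K)}
    (hL : IsMonomialIdeal L) {f : MvPolynomial σ K} (hp : (L.colon {f}).IsPrime) :
    ∃ u ∈ f.support, IsPrimeWitness (monExponents L) u := by
  classical
  have key : ∃ u ∈ f.support, ∀ w, u + w ∈ monExponents L →
      monomial w (1 : K) ∈ L.colon {f} := by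
    by_contra! h
    choose! w hw hwp using h
    have hprod : ∏ u ∈ f.support, monomial (w u) (1 : K) ∈ L.colon {f} := by
      rw [Submodule.mem_colon_singleton, smul_eq_mul, mul_comm, ← monomial_sum_one]
      apply mem_of_support_subset_monExponents
      intro v hv
      obtain ⟨u, hu, rfl⟩ := mem_support_mul_monomial hv
      refine monExponents_of_le (hw u hu) ?_
      gcongr
      exact Finset.single_le_sum (f := w) (fun _ _ => zero_le) hu
    obtain ⟨u, hu, h⟩ := (hp.prod_mem_iff).1 hprod
    exact hwp u hu h
  obtain ⟨u, hu, h⟩ := key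
  have hiff : ∀ w, u + w ∈ monExponents L ↔ monomial w (1 : K) ∈ L.colon {f} := by
    refine fun w => ⟨h w, fun hw => ?_⟩
    rw [Submodule.mem_colon_singleton, smul_eq_mul, mul_comm] at hw
    apply hL.mem_iff.1 hw
    rw [mem_support_iff, coeff_mul_monomial]
    simpa using hu
  refine ⟨u, hu, ?_, fun w w' hww' => ?_⟩
  · intro hmem
    have h0 := (hiff 0).1 (by simpa using hmem)
    exact hp.ne_top ((Ideal.eq_top_iff_one _).2 h0)
  · rw [add_assoc, hiff, ← one_mul (1 : K), ← monomial_mul] at hww'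
    rw [hiff, hiff]
    exact hp.mem_or_mem hww'

theorem colon_mk_singleton (L : Ideal (MvPolynomial σ K)) (f : MvPolynomial σ K) :
    (⊥ : Submodule (MvPolynomial σ K) (MvPolynomial σ K ⧸ L)).colon
      {Ideal.Quotient.mk L f} = L.colon {f} := by
  ext g
  rw [Submodule.mem_colon_singleton, Submodule.mem_colon_singleton, Submodule.mem_bot,
    smul_eq_mul, ← Ideal.Quotient.eq_zero_iff_mem, map_mul]
  rfl

theorem colon_span_singleton (L : Ideal (MvPolynomial σ K)) (f : MvPolynomial σ K) :
    L.colon (Ideal.span {f}) = L.colon {f} := by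
  ext g
  rw [Ideal.span, Submodule.mem_colon_span_singleton, Submodule.mem_colon_singleton]

theorem IsMonomialIdeal.vnumber_eq {L : Ideal (MvPolynomial σ K)} (hL : IsMonomialIdeal L) :
    vnumber L = sInf {d | ∃ u, u.degree = d ∧ IsPrimeWitness (monExponents L) u} := by
  unfold vnumber
  congr 1
  ext d
  constructor
  · rintro ⟨p, hp, f, hf, rfl⟩
    have hprime := IsAssociatedPrime.isPrime hp
    rw [colon_span_singleton] at hprime
    obtain ⟨u, hu, hw⟩ := exists_isPrimeWitness_of_isPrime_colon hL hprime
    refine ⟨u, ?_, hw⟩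
    by_contra hne
    exact mem_support_iff.1 hu (hf.coeff_eq_zero hne)
  · rintro ⟨u, rfl, hu⟩
    have hprime : (L.colon (Ideal.span {monomial u (1 : K)})).IsPrime := by
      rw [hu.colon_eq hL]
      exact isPrime_span_X_image _
    refine ⟨_, ?_, monomial u 1, isHomogeneous_monomial _ rfl, rfl⟩
    refine ⟨hprime, Ideal.Quotient.mk L (monomial u 1), ?_⟩
    rw [colon_mk_singleton, ← colon_span_singleton, hprime.radical]

theorem IsMonomialIdeal.vnumber_le {L : Ideal (MvPolynomial σ K)} (hL : IsMonomialIdeal L)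
    {u : σ →₀ ℕ} (hu : IsPrimeWitness (monExponents L) u) : vnumber L ≤ u.degree := by
  rw [hL.vnumber_eq]
  exact Nat.sInf_le ⟨u, rfl, hu⟩

theorem IsMonomialIdeal.exists_isPrimeWitness_degree_eq_vnumber [Finite σ]
    {L : Ideal (MvPolynomial σ K)} (hL : IsMonomialIdeal L) (hne : L ≠ ⊤) :
    ∃ u, u.degree = vnumber L ∧ IsPrimeWitness (monExponents L) u := by
  rw [hL.vnumber_eq]
  apply Nat.sInf_mem (s := {d | ∃ u, u.degree = d ∧ IsPrimeWitness (monExponents L) u})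
  have : Nontrivial (MvPolynomial σ K ⧸ L) := Ideal.Quotient.nontrivial_iff.2 hne
  obtain ⟨p, hp⟩ := associatedPrimes.nonempty (MvPolynomial σ K) (MvPolynomial σ K ⧸ L)
  obtain ⟨hprime, x, rfl⟩ := isAssociatedPrime_iff.1 hp
  obtain ⟨f, rfl⟩ := Ideal.Quotient.mk_surjective x
  rw [colon_mk_singleton] at hprime
  obtain ⟨u, -, hu⟩ := exists_isPrimeWitness_of_isPrime_colon hL hprime
  exact ⟨_, u, rfl, hu⟩

end PrimeWitness

section Powers

variable {σ K : Type} [Field K]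

open Pointwise in
theorem IsMonomialIdeal.mul_eq_span {I J : Ideal (MvPolynomial σ K)} (hI : IsMonomialIdeal I)
    (hJ : IsMonomialIdeal J) :
    I * J = Ideal.span ((fun a => monomial a (1 : K)) '' (monExponents I + monExponents J)) := by
  conv_lhs => rw [hI.eq_span, hJ.eq_span]
  rw [Ideal.span_mul_span']
  congr 1
  ext f
  constructor
  · rintro ⟨_, ⟨a, ha, rfl⟩, _, ⟨b, hb, rfl⟩, rfl⟩
    exact ⟨a + b, ⟨a, ha, b, hb, rfl⟩, by simp [monomial_mul]⟩
  · rintro ⟨_, ⟨a, ha, b, hb, rfl⟩, rfl⟩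
    exact ⟨_, ⟨a, ha, rfl⟩, _, ⟨b, hb, rfl⟩, by simp [monomial_mul]⟩

theorem IsMonomialIdeal.pow {I : Ideal (MvPolynomial σ K)} (hI : IsMonomialIdeal I) (k : ℕ) :
    IsMonomialIdeal (I ^ k) := by
  induction k with
  | zero =>
    refine ⟨{0}, ?_⟩
    rw [pow_zero, Set.image_singleton, Ideal.one_eq_top]
    exact (Ideal.span_singleton_one (α := MvPolynomial σ K)).symm
  | succ k ih =>
    rw [pow_succ]
    exact ⟨_, ih.mul_eq_span hI⟩

theorem IsMonomialIdeal.exists_add_of_mem_pow_succ {I : Ideal (MvPolynomial σ K)}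
    (hI : IsMonomialIdeal I) {k : ℕ} {u : σ →₀ ℕ} (hu : u ∈ monExponents (I ^ (k + 1))) :
    ∃ a ∈ monExponents (I ^ k), ∃ b ∈ monExponents I, a + b = u := by
  rw [pow_succ, (hI.pow k).mul_eq_span hI, mem_monExponents_span] at hu
  obtain ⟨_, ⟨a, ha, b, hb, rfl⟩, hle⟩ := hu
  obtain ⟨c, rfl⟩ := exists_add_of_le hle
  exact ⟨a, ha, b + c, add_mem_monExponents hb c, (add_assoc a b c).symm⟩

theorem add_mem_monExponents_pow_succ {I : Ideal (MvPolynomial σ K)} {k : ℕ} {a b : σ →₀ ℕ}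
    (ha : a ∈ monExponents (I ^ k)) (hb : b ∈ monExponents I) :
    a + b ∈ monExponents (I ^ (k + 1)) := by
  have h := Ideal.mul_mem_mul ha hb
  rwa [monomial_mul, one_mul, ← pow_succ] at h

theorem IsMonomialIdeal.le_degree_of_mem_pow {I : Ideal (MvPolynomial σ K)}
    (hI : IsMonomialIdeal I) (hne : I ≠ ⊤) {k : ℕ} {u : σ →₀ ℕ}
    (hu : u ∈ monExponents (I ^ k)) : k ≤ u.degree := by
  induction k generalizing u with
  | zero => exact Nat.zero_le _
  | succ k ih =>
    obtain ⟨a, ha, b, hb, rfl⟩ := hI.exists_add_of_mem_pow_succ hu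
    have hb0 : b.degree ≠ 0 := by
      rw [Ne, Finsupp.degree_eq_zero_iff]
      rintro rfl
      exact hne ((Ideal.eq_top_iff_one _).2 hb)
    have := ih ha
    rw [map_add]
    omega

/-- Cancelling a variable lowers the order of a monomial along `I` by at most one. -/
theorem IsMonomialIdeal.mem_pow_of_add_single_mem_pow_succ {I : Ideal (MvPolynomial σ K)}
    (hI : IsMonomialIdeal I) {k : ℕ} {u : σ →₀ ℕ} {i : σ}
    (hu : u + Finsupp.single i 1 ∈ monExponents (I ^ (k + 1))) : u ∈ monExponents (I ^ k) := by
  induction k generalizing u with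
  | zero => simp [monExponents]
  | succ k ih =>
    obtain ⟨a, ha, b, hb, hab⟩ := hI.exists_add_of_mem_pow_succ hu
    by_cases hbi : b i = 0
    · have hai : Finsupp.single i 1 ≤ a := by
        have := DFunLike.congr_fun hab i
        simp [hbi] at this
        simp [this]
      obtain ⟨a', rfl⟩ := exists_add_of_le hai
      have hu' : u = a' + b := by
        apply add_right_cancel (b := Finsupp.single i 1)
        rw [← hab]
        abel
      rw [hu']
      exact add_mem_monExponents_pow_succ (ih (by rwa [add_comm a'])) hb
    · have hle : Finsupp.single i 1 ≤ b := by simpa [Nat.one_le_iff_ne_zero] using hbi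
      obtain ⟨b', rfl⟩ := exists_add_of_le hle
      have hu' : u = a + b' := by
        apply add_right_cancel (b := Finsupp.single i 1)
        rw [← hab]
        abel
      rw [hu']
      exact add_mem_monExponents ha b'

theorem IsMonomialIdeal.mem_pow_pred_of_isPrimeWitness {I : Ideal (MvPolynomial σ K)}
    (hI : IsMonomialIdeal I) (hnz : I ≠ ⊥) {k : ℕ} {u : σ →₀ ℕ}
    (hu : IsPrimeWitness (monExponents (I ^ (k + 1))) u) : u ∈ monExponents (I ^ k) := by
  obtain ⟨f, hf, hf0⟩ := Submodule.exists_mem_ne_zero_of_ne_bot (pow_ne_zero (k + 1) hnz)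
  obtain ⟨w, hw⟩ := support_nonempty.2 hf0
  have hmem := add_mem_monExponents ((hI.pow (k + 1)).mem_iff.1 hf w hw) u
  rw [add_comm w] at hmem
  obtain ⟨i, -, hi⟩ := hu.exists_single hmem
  exact hI.mem_pow_of_add_single_mem_pow_succ hi

open Classical in
/-- The part of an exponent vector supported on a set of variables. -/
abbrev restrictTo (V : Set σ) (u : σ →₀ ℕ) : σ →₀ ℕ := u.filter (· ∈ V)

theorem restrictTo_le (V : Set σ) (u : σ →₀ ℕ) : restrictTo V u ≤ u := by
  intro i
  rw [Finsupp.filter_apply]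
  split_ifs <;> simp

theorem restrictTo_restrictTo (V : Set σ) (u : σ →₀ ℕ) :
    restrictTo V (restrictTo V u) = restrictTo V u := by
  ext i
  simp only [Finsupp.filter_apply]
  split_ifs <;> rfl

theorem restrictTo_add (V : Set σ) (u w : σ →₀ ℕ) :
    restrictTo V (u + w) = restrictTo V u + restrictTo V w := by
  classical exact Finsupp.filter_add

theorem restrictTo_restrictTo_of_disjoint {V W : Set σ} (h : Disjoint V W) (u : σ →₀ ℕ) :
    restrictTo V (restrictTo W u) = 0 := by
  ext i
  simp only [Finsupp.filter_apply, Finsupp.zero_apply]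
  split_ifs with h1 h2
  · exact absurd h2 (h.notMem_of_mem_left h1)
  all_goals rfl

theorem restrictTo_sum_restrictTo {ι : Type} [Fintype ι] {V : ι → Set σ}
    (hV : Pairwise fun i j => Disjoint (V i) (V j)) (u : ι → σ →₀ ℕ) (j : ι) :
    restrictTo (V j) (∑ l, restrictTo (V l) (u l)) = restrictTo (V j) (u j) := by
  classical
  rw [restrictTo, Finsupp.filter_sum, Finset.sum_eq_single j]
  · exact restrictTo_restrictTo _ _
  · intro l _ hl
    exact restrictTo_restrictTo_of_disjoint (hV hl.symm) _
  · simp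

theorem sum_restrictTo_le {ι : Type} [Fintype ι] {V : ι → Set σ}
    (hV : Pairwise fun i j => Disjoint (V i) (V j)) (u : σ →₀ ℕ) :
    ∑ l, restrictTo (V l) u ≤ u := by
  classical
  intro i
  rw [Finsupp.finsetSum_apply]
  by_cases h : ∃ j, i ∈ V j
  · obtain ⟨j, hj⟩ := h
    rw [Finset.sum_eq_single j]
    · exact restrictTo_le _ _ i
    · intro l _ hl
      exact Finsupp.filter_apply_neg _ _ ((hV hl.symm).notMem_of_mem_left hj)
    · simp
  · push Not at h
    rw [Finset.sum_eq_zero fun l _ => Finsupp.filter_apply_neg _ _ (h l)]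
    exact Nat.zero_le _

theorem restrictTo_suppIdeal_mem {I : Ideal (MvPolynomial σ K)} {u : σ →₀ ℕ}
    (hu : u ∈ monExponents I) : restrictTo (suppIdeal I) u ∈ monExponents I := by
  induction hd : u.degree using Nat.strong_induction_on generalizing u with
  | _ d ih =>
  by_cases hmin : u ∈ minimalMonGens I
  · classical
    rwa [restrictTo, (Finsupp.filter_eq_self_iff _ _).2]
    intro i hi
    exact Set.mem_biUnion hmin (by simpa using hi)
  · have : ∃ b, b ∈ monExponents I ∧ b ≤ u ∧ b ≠ u := by
      by_contra! h
      exact hmin ⟨hu, h⟩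
    obtain ⟨b, hb, hle, hne⟩ := this
    obtain ⟨c, rfl⟩ := exists_add_of_le hle
    have hc : c.degree ≠ 0 := by
      rw [Ne, Finsupp.degree_eq_zero_iff]
      rintro rfl
      simp at hne
    rw [map_add] at hd
    rw [restrictTo_add]
    exact add_mem_monExponents (ih b.degree (by omega) hb rfl) _

theorem IsMonomialIdeal.restrictTo_mem_pow_iff {I : Ideal (MvPolynomial σ K)}
    (hI : IsMonomialIdeal I) {k : ℕ} {u : σ →₀ ℕ} :
    restrictTo (suppIdeal I) u ∈ monExponents (I ^ k) ↔ u ∈ monExponents (I ^ k) := by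
  refine ⟨fun h => monExponents_of_le h (restrictTo_le _ _), fun h => ?_⟩
  induction k generalizing u with
  | zero => simp [monExponents]
  | succ k ih =>
    obtain ⟨a, ha, b, hb, rfl⟩ := hI.exists_add_of_mem_pow_succ h
    rw [restrictTo_add]
    exact add_mem_monExponents_pow_succ (ih ha) (restrictTo_suppIdeal_mem hb)

end Powers

section Sums

variable {σ K ι : Type} [Field K] [Fintype ι] {I : ι → Ideal (MvPolynomial σ K)}

theorem sum_eq_span_iUnion (hmon : ∀ j, IsMonomialIdeal (I j)) :
    ∑ j, I j = Ideal.span ((fun a => monomial a (1 : K)) '' ⋃ j, monExponents (I j)) := by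
  rw [Set.image_iUnion, Ideal.span_iUnion, Ideal.sum_eq_sup, Finset.sup_univ_eq_iSup]
  exact iSup_congr fun j => (hmon j).eq_span

theorem isMonomialIdeal_sum (hmon : ∀ j, IsMonomialIdeal (I j)) : IsMonomialIdeal (∑ j, I j) :=
  ⟨_, sum_eq_span_iUnion hmon⟩

theorem exists_mem_of_mem_monExponents_sum (hmon : ∀ j, IsMonomialIdeal (I j)) {u : σ →₀ ℕ}
    (hu : u ∈ monExponents (∑ j, I j)) : ∃ j, u ∈ monExponents (I j) := by
  rw [sum_eq_span_iUnion hmon, mem_monExponents_span] at hu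
  obtain ⟨g, hg, hle⟩ := hu
  obtain ⟨j, hj⟩ := Set.mem_iUnion.1 hg
  exact ⟨j, monExponents_of_le hj hle⟩

theorem exists_forall_mem_pow_of_mem_sum_pow (hmon : ∀ j, IsMonomialIdeal (I j)) {k : ℕ}
    {u : σ →₀ ℕ} (hu : u ∈ monExponents ((∑ j, I j) ^ k)) :
    ∃ c : ι → ℕ, ∑ j, c j = k ∧ ∀ j, u ∈ monExponents (I j ^ c j) := by
  classical
  induction k generalizing u with
  | zero => exact ⟨0, by simp, fun j => by simp [monExponents]⟩
  | succ k ih =>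
    obtain ⟨a, ha, b, hb, rfl⟩ := (isMonomialIdeal_sum hmon).exists_add_of_mem_pow_succ hu
    obtain ⟨c, hc, hac⟩ := ih ha
    obtain ⟨j, hj⟩ := exists_mem_of_mem_monExponents_sum hmon hb
    refine ⟨c + Pi.single j 1, by simp [Finset.sum_add_distrib, hc], fun l => ?_⟩
    by_cases hl : l = j
    · subst hl
      simpa using add_mem_monExponents_pow_succ (hac l) hj
    · simpa [hl] using add_mem_monExponents (hac l) b

theorem mem_sum_pow_of_forall_mem_pow (hmon : ∀ j, IsMonomialIdeal (I j))
    (hsupp : Pairwise fun i j => Disjoint (suppIdeal (I i)) (suppIdeal (I j)))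
    {u : σ →₀ ℕ} {c : ι → ℕ} (hu : ∀ j, u ∈ monExponents (I j ^ c j)) :
    u ∈ monExponents ((∑ j, I j) ^ ∑ j, c j) := by
  refine monExponents_of_le ?_ (sum_restrictTo_le hsupp u)
  rw [mem_monExponents, monomial_sum_one, ← Finset.prod_pow_eq_pow_sum]
  refine Ideal.prod_mem_prod fun j _ => ?_
  have hle : I j ≤ ∑ l, I l := by
    rw [Ideal.sum_eq_sup]
    exact Finset.le_sup (Finset.mem_univ j)
  exact Ideal.pow_right_mono hle _ ((hmon j).restrictTo_mem_pow_iff.2 (hu j))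

/-- The largest power of `I` containing the monomial with exponent vector `u`. -/
def monOrder (I : Ideal (MvPolynomial σ K)) (u : σ →₀ ℕ) : ℕ :=
  sSup {r | u ∈ monExponents (I ^ r)}

theorem IsMonomialIdeal.le_monOrder_iff {I : Ideal (MvPolynomial σ K)} (hI : IsMonomialIdeal I)
    (hne : I ≠ ⊤) {u : σ →₀ ℕ} {r : ℕ} : r ≤ monOrder I u ↔ u ∈ monExponents (I ^ r) := by
  have hbdd : BddAbove {r | u ∈ monExponents (I ^ r)} :=
    ⟨u.degree, fun _ h => hI.le_degree_of_mem_pow hne h⟩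
  refine ⟨fun h => ?_, fun h => le_csSup hbdd h⟩
  have hmem : u ∈ monExponents (I ^ monOrder I u) :=
    Nat.sSup_mem ⟨0, by simp [monExponents]⟩ hbdd
  exact Ideal.pow_le_pow_right h hmem

theorem IsMonomialIdeal.monOrder_congr {I : Ideal (MvPolynomial σ K)} (hI : IsMonomialIdeal I)
    {u v : σ →₀ ℕ} (h : restrictTo (suppIdeal I) u = restrictTo (suppIdeal I) v) :
    monOrder I u = monOrder I v := by
  unfold monOrder
  congr 1
  ext r
  change u ∈ monExponents (I ^ r) ↔ v ∈ monExponents (I ^ r)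
  rw [← hI.restrictTo_mem_pow_iff, h, hI.restrictTo_mem_pow_iff]

theorem IsMonomialIdeal.monOrder_le_add {I : Ideal (MvPolynomial σ K)} (hI : IsMonomialIdeal I)
    (hne : I ≠ ⊤) (u w : σ →₀ ℕ) : monOrder I u ≤ monOrder I (u + w) :=
  (hI.le_monOrder_iff hne).2 (add_mem_monExponents ((hI.le_monOrder_iff hne).1 le_rfl) w)

theorem mem_sum_pow_iff (hpr : ∀ j, I j ≠ ⊤) (hmon : ∀ j, IsMonomialIdeal (I j))
    (hsupp : Pairwise fun i j => Disjoint (suppIdeal (I i)) (suppIdeal (I j)))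
    {u : σ →₀ ℕ} {k : ℕ} :
    u ∈ monExponents ((∑ j, I j) ^ k) ↔ k ≤ ∑ j, monOrder (I j) u := by
  constructor
  · intro hu
    obtain ⟨c, rfl, hc⟩ := exists_forall_mem_pow_of_mem_sum_pow hmon hu
    exact Finset.sum_le_sum fun j _ => ((hmon j).le_monOrder_iff (hpr j)).2 (hc j)
  · intro h
    exact Ideal.pow_le_pow_right h (mem_sum_pow_of_forall_mem_pow hmon hsupp
      fun j => ((hmon j).le_monOrder_iff (hpr j)).1 le_rfl)

/-- A prime witness for a power of a sum restricts to prime witnesses for powers of the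
summands. -/
theorem IsPrimeWitness.restrictTo_of_sum_pow (hpr : ∀ j, I j ≠ ⊤)
    (hmon : ∀ j, IsMonomialIdeal (I j))
    (hsupp : Pairwise fun i j => Disjoint (suppIdeal (I i)) (suppIdeal (I j)))
    {u : σ →₀ ℕ} {m : ℕ} (hm : 1 ≤ m)
    (hu : IsPrimeWitness (monExponents ((∑ j, I j) ^ (∑ j, monOrder (I j) u + m))) u) (j : ι) :
    IsPrimeWitness (monExponents (I j ^ (monOrder (I j) u + m)))
      (restrictTo (suppIdeal (I j)) u) := by
  classical
  have hadd : ∀ w, restrictTo (suppIdeal (I j)) u + w ∈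
      monExponents (I j ^ (monOrder (I j) u + m)) ↔
      u + restrictTo (suppIdeal (I j)) w ∈
        monExponents ((∑ j, I j) ^ (∑ j, monOrder (I j) u + m)) := by
    intro w
    rw [mem_sum_pow_iff hpr hmon hsupp, ← (hmon j).le_monOrder_iff (hpr j)]
    have h1 : monOrder (I j) (restrictTo (suppIdeal (I j)) u + w) =
        monOrder (I j) (u + restrictTo (suppIdeal (I j)) w) := by
      apply (hmon j).monOrder_congr
      simp only [restrictTo_add, restrictTo_restrictTo]
    have h2 : ∀ l ∈ Finset.univ.erase j,
        monOrder (I l) (u + restrictTo (suppIdeal (I j)) w) = monOrder (I l) u := by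
      intro l hl
      apply (hmon l).monOrder_congr
      rw [restrictTo_add,
        restrictTo_restrictTo_of_disjoint (hsupp (Finset.ne_of_mem_erase hl)), add_zero]
    rw [h1, ← Finset.add_sum_erase _ _ (Finset.mem_univ j),
      ← Finset.add_sum_erase _ _ (Finset.mem_univ j), Finset.sum_congr rfl h2]
    omega
  refine ⟨fun h => ?_, fun w w' h => ?_⟩
  · rw [(hmon j).restrictTo_mem_pow_iff, ← (hmon j).le_monOrder_iff (hpr j)] at h
    omega
  · rw [add_assoc, hadd, restrictTo_add, ← add_assoc] at h
    rw [hadd, hadd]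
    exact hu.2 _ _ h

/-- Prime witnesses for powers of the summands glue to one for a power of the sum. -/
theorem isPrimeWitness_sum_restrictTo (hnz : ∀ j, I j ≠ ⊥) (hpr : ∀ j, I j ≠ ⊤)
    (hmon : ∀ j, IsMonomialIdeal (I j))
    (hsupp : Pairwise fun i j => Disjoint (suppIdeal (I i)) (suppIdeal (I j)))
    {u : ι → σ →₀ ℕ} {c : ι → ℕ}
    (hu : ∀ j, IsPrimeWitness (monExponents (I j ^ (c j + 1))) (u j)) :
    IsPrimeWitness (monExponents ((∑ j, I j) ^ (∑ j, c j + 1)))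
      (∑ j, restrictTo (suppIdeal (I j)) (u j)) := by
  classical
  set U := ∑ j, restrictTo (suppIdeal (I j)) (u j) with hU
  have hord : ∀ j w, monOrder (I j) (U + w) = monOrder (I j) (u j + w) := by
    intro j w
    apply (hmon j).monOrder_congr
    rw [restrictTo_add, restrictTo_add, hU, restrictTo_sum_restrictTo hsupp]
  have hordu : ∀ j, monOrder (I j) (u j) = c j := by
    intro j
    have h1 := (hu j).1
    have h2 := (hmon j).mem_pow_pred_of_isPrimeWitness (hnz j) (hu j)
    rw [← (hmon j).le_monOrder_iff (hpr j)] at h1 h2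
    omega
  have hlarge : ∀ j w, u j + w ∈ monExponents (I j ^ (c j + 1)) →
      U + w ∈ monExponents ((∑ j, I j) ^ (∑ j, c j + 1)) := by
    intro j w h
    rw [← (hmon j).le_monOrder_iff (hpr j)] at h
    rw [mem_sum_pow_iff hpr hmon hsupp, Nat.add_one_le_iff]
    simp only [hord]
    refine Finset.sum_lt_sum (fun l _ => ?_) ⟨j, Finset.mem_univ j, h⟩
    rw [← hordu l]
    exact (hmon l).monOrder_le_add (hpr l) _ _
  refine ⟨fun h => ?_, fun w w' h => ?_⟩
  · rw [mem_sum_pow_iff hpr hmon hsupp] at h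
    have : ∀ j, monOrder (I j) U = c j := fun j => by simpa [hordu] using hord j 0
    simp only [this] at h
    omega
  · rw [mem_sum_pow_iff hpr hmon hsupp, Nat.add_one_le_iff] at h
    obtain ⟨j, -, hj⟩ := Finset.exists_lt_of_sum_lt h
    rw [add_assoc, hord, ← Nat.add_one_le_iff, (hmon j).le_monOrder_iff (hpr j), ← add_assoc] at hj
    exact ((hu j).2 _ _ hj).imp (hlarge j w) (hlarge j w')

theorem sum_ne_top_of_monomial (hpr : ∀ j, I j ≠ ⊤) (hmon : ∀ j, IsMonomialIdeal (I j)) :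
    ∑ j, I j ≠ ⊤ := by
  intro h
  obtain ⟨j, hj⟩ := exists_mem_of_mem_monExponents_sum hmon (u := 0)
    (by rw [mem_monExponents, h]; exact Submodule.mem_top)
  exact hpr j ((Ideal.eq_top_iff_one _).2 hj)

theorem alphaDeg_pos_s11 {I : Ideal (MvPolynomial σ K)} (hI : IsMonomialIdeal I) (hnz : I ≠ ⊥)
    (hpr : I ≠ ⊤) : 1 ≤ alphaDeg I := by
  rw [Nat.one_le_iff_ne_zero]
  intro h
  rcases Nat.sInf_eq_zero.1 h with ⟨f, hf, hf0, hhom⟩ | hempty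
  · obtain ⟨u, hu⟩ := support_nonempty.2 hf0
    have hdeg : u.degree = 0 := by
      by_contra hne
      exact mem_support_iff.1 hu (hhom.coeff_eq_zero hne)
    rw [Finsupp.degree_eq_zero_iff] at hdeg
    subst hdeg
    exact hpr ((Ideal.eq_top_iff_one _).2 (hI.mem_iff.1 hf 0 hu))
  · obtain ⟨f, hf, hf0⟩ := Submodule.exists_mem_ne_zero_of_ne_bot hnz
    obtain ⟨u, hu⟩ := support_nonempty.2 hf0
    exact Set.eq_empty_iff_forall_notMem.1 hempty u.degree
      ⟨monomial u 1, hI.mem_iff.1 hf u hu, by simp, isHomogeneous_monomial _ rfl⟩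

end Sums

/-- Theorem 5.2, v-stability index one: let `I_1,…,I_t` be nonzero proper
monomial ideals with pairwise disjoint supports such that `v(I_j^k) = α(I_j)·k − 1` for all
`k ≥ 1`.  Then for every `k ≥ 1`,
`v((I_1+⋯+I_t)^k) = (min_j α(I_j))·k + (∑_j α(I_j) − min_j α(I_j) − t)`. -/
theorem stmt11 {K : Type} [Field K] {n t : ℕ} (ht : 0 < t)
    (I : Fin t → Ideal (MvPolynomial (Fin n) K))
    (hnz : ∀ j, I j ≠ ⊥) (hpr : ∀ j, I j ≠ ⊤) (hmon : ∀ j, IsMonomialIdeal (I j))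
    (hsupp : Pairwise fun i j => Disjoint (suppIdeal (I i)) (suppIdeal (I j)))
    (hv : ∀ j, ∀ k : ℕ, 1 ≤ k → vnumber (I j ^ k) = alphaDeg (I j) * k - 1) :
    ∀ k : ℕ, 1 ≤ k →
      (vnumber ((∑ j, I j) ^ k) : ℤ) =
        ((Finset.univ.inf' ⟨⟨0, ht⟩, Finset.mem_univ _⟩ fun j => alphaDeg (I j) : ℕ) : ℤ) * k +
        ((∑ j, (alphaDeg (I j) : ℤ)) -
          ((Finset.univ.inf' ⟨⟨0, ht⟩, Finset.mem_univ _⟩ fun j => alphaDeg (I j) : ℕ) : ℤ)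
          - t) := by
  intro k hk
  set μ := Finset.univ.inf' ⟨⟨0, ht⟩, Finset.mem_univ _⟩ fun j => alphaDeg (I j) with hμ
  have hα : ∀ j, 1 ≤ alphaDeg (I j) := fun j => alphaDeg_pos_s11 (hmon j) (hnz j) (hpr j)
  have hv' : ∀ (j : Fin t) (c : ℕ),
      ((vnumber (I j ^ (c + 1)) : ℕ) : ℤ) = alphaDeg (I j) * (c + 1) - 1 := by
    intro j c
    rw [hv j (c + 1) (Nat.le_add_left 1 c),
      Nat.cast_sub (Nat.mul_pos (hα j) c.succ_pos)]
    push_cast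
    ring
  have hμle : ∀ j, μ ≤ alphaDeg (I j) := fun j => Finset.inf'_le _ (Finset.mem_univ j)
  have hsum : IsMonomialIdeal ((∑ j, I j) ^ k) := (isMonomialIdeal_sum hmon).pow k
  have hpow : ∀ {L : Ideal (MvPolynomial (Fin n) K)} {r : ℕ}, L ≠ ⊤ → 1 ≤ r → L ^ r ≠ ⊤ :=
    fun hL hr h => hL (top_unique (h ▸ Ideal.pow_le_self (Nat.one_le_iff_ne_zero.1 hr)))
  obtain ⟨j₀, -, hj₀⟩ := Finset.exists_mem_eq_inf' ⟨⟨0, ht⟩, Finset.mem_univ _⟩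
    fun j => alphaDeg (I j)
  apply le_antisymm
  · let c : Fin t → ℕ := Pi.single j₀ (k - 1)
    choose w hw hwit using fun j =>
      ((hmon j).pow (c j + 1)).exists_isPrimeWitness_degree_eq_vnumber
        (hpow (hpr j) (Nat.le_add_left 1 _))
    have hU := isPrimeWitness_sum_restrictTo hnz hpr hmon hsupp hwit
    rw [show ∑ j, c j = k - 1 by simp [c], Nat.sub_add_cancel hk] at hU
    have hle := hsum.vnumber_le hU
    have hdeg : (∑ j, restrictTo (suppIdeal (I j)) (w j)).degree ≤
        ∑ j, vnumber (I j ^ (c j + 1)) := by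
      rw [map_sum]
      exact Finset.sum_le_sum fun j _ => (Finsupp.degree_mono (restrictTo_le _ _)).trans_eq (hw j)
    have hcast : ((vnumber ((∑ j, I j) ^ k) : ℕ) : ℤ) ≤
        ∑ j, ((vnumber (I j ^ (c j + 1)) : ℕ) : ℤ) :=
      mod_cast hle.trans hdeg
    refine hcast.trans_eq ?_
    have hterm : ∀ j, ((vnumber (I j ^ (c j + 1)) : ℕ) : ℤ) =
        (if j = j₀ then (μ : ℤ) * (k - 1) else 0) + (alphaDeg (I j) : ℤ) - 1 := by
      intro j
      rw [hv']
      by_cases h : j = j₀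
      · subst h
        rw [hμ, hj₀]
        simp only [c, Pi.single_eq_same, if_true, Nat.cast_sub hk]
        push_cast
        ring
      · simp [c, h]
    simp only [hterm, Finset.sum_sub_distrib, Finset.sum_add_distrib, Finset.sum_ite_eq',
      Finset.mem_univ, if_true, Finset.sum_const, Finset.card_univ, Fintype.card_fin]
    simp
    ring
  · obtain ⟨u, hu, hwit⟩ := hsum.exists_isPrimeWitness_degree_eq_vnumber
      (hpow (sum_ne_top_of_monomial hpr hmon) hk)
    have hlt : ∑ j, monOrder (I j) u < k := by
      have := hwit.1
      rw [mem_sum_pow_iff hpr hmon hsupp] at this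
      omega
    obtain ⟨m, rfl⟩ := Nat.exists_eq_add_of_lt hlt
    rw [add_assoc] at hwit
    have hres := hwit.restrictTo_of_sum_pow hpr hmon hsupp (Nat.le_add_left 1 m)
    have hdeg : ∑ j, (restrictTo (suppIdeal (I j)) u).degree ≤ u.degree := by
      rw [← map_sum]
      exact Finsupp.degree_mono (sum_restrictTo_le hsupp u)
    have hle : ∀ j, (μ : ℤ) * monOrder (I j) u + alphaDeg (I j) * m + alphaDeg (I j) - 1 ≤
        (restrictTo (suppIdeal (I j)) u).degree := by
      intro j
      have h1 : (vnumber (I j ^ (monOrder (I j) u + m + 1)) : ℤ) ≤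
          (restrictTo (suppIdeal (I j)) u).degree := mod_cast ((hmon j).pow _).vnumber_le (hres j)
      rw [hv'] at h1
      have h2 : (μ : ℤ) * monOrder (I j) u ≤ alphaDeg (I j) * monOrder (I j) u := by
        gcongr
        exact hμle j
      push_cast at h1
      linarith
    have htotal := Finset.sum_le_sum fun j (_ : j ∈ Finset.univ) => hle j
    simp only [Finset.sum_sub_distrib, Finset.sum_add_distrib, ← Finset.mul_sum,
      ← Finset.sum_mul, Finset.sum_const, Finset.card_univ, Fintype.card_fin] at htotal
    have hμsum : (μ : ℤ) ≤ ∑ j, (alphaDeg (I j) : ℤ) := by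
      refine (Nat.cast_le.2 (hμle j₀)).trans ?_
      exact Finset.single_le_sum (f := fun j => (alphaDeg (I j) : ℤ))
        (fun _ _ => Nat.cast_nonneg _) (Finset.mem_univ j₀)
    have hm : (μ : ℤ) * m ≤ (∑ j, (alphaDeg (I j) : ℤ)) * m := by gcongr
    have hdeg' : (∑ j, ((restrictTo (suppIdeal (I j)) u).degree : ℤ)) ≤
        vnumber ((∑ j, I j) ^ (∑ j, monOrder (I j) u + m + 1)) := by
      rw [← hu]
      exact_mod_cast hdeg
    refine le_trans ?_ (htotal.trans hdeg')
    push_cast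
    simp only [nsmul_eq_mul, mul_one]
    linarith
end
end
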